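/- Let n ≥ 2, let f : ℂⁿ → ℂ be holomorphic, and let p ∈ ℂⁿ with f(p) = 0 and (∂f/∂z₁)(p) ≠ 0. Then there exist an open neighborhood V of p and a holomorphic map X : V → ℂⁿ with X nowhere vanishing on V, such that for every δ > 0 there is an open neighborhood V′ ⊆ V of p with the following property: for every q ∈ V′ with f(q) ≠ 0, every ε > 0, and every holomorphic Z : B(0,ε) → V with Z(0) = q, Z′(T) = X(Z(T)) and f(Z(T)) ≠ 0 for all T ∈ B(0,ε), the Gaussian curvature K(0) at T = 0 of the conformal metric h(T)|dT|², where h(T) = (1 + |f(Z(T))|²·u(|f(Z(T))|²)²)·|df(Z(T))(X(Z(T)))|² + ‖X(Z(T))‖², satisfies |K(0) − (−4)| < δ. (In other words, the leafwise Gaussian curvature along the foliation induced by X tends to −4 as the base point tends to p.) -/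

import Mathlib

open Complex Filter Topology Metric
open scoped ComplexOrder

/-- The function `u(t) = (t-1)/(t log t)` for `t ≠ 1`, extended by `u(1) = 1`. -/
noncomputable def u (t : ℝ) : ℝ := if t = 1 then 1 else (t - 1) / (t * Real.log t)

/-- Wirtinger derivative `∂g` of a complex-valued function on `ℂ` (real-differentiable sense). -/
noncomputable def wdz (g : ℂ → ℂ) (z : ℂ) : ℂ :=
  (fderiv ℝ g z 1 - Complex.I * fderiv ℝ g z Complex.I) / 2

/-- Wirtinger derivative `∂̄g` of a complex-valued function on `ℂ`. -/
noncomputable def wdzbar (g : ℂ → ℂ) (z : ℂ) : ℂ :=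
  (fderiv ℝ g z 1 + Complex.I * fderiv ℝ g z Complex.I) / 2

/-- `∂h` for a real-valued `h`. -/
noncomputable def wdzR (h : ℂ → ℝ) : ℂ → ℂ := wdz fun w => (h w : ℂ)

/-- `∂̄h` for a real-valued `h`. -/
noncomputable def wdzbarR (h : ℂ → ℝ) : ℂ → ℂ := wdzbar fun w => (h w : ℂ)

/-- `∂∂̄h` for a real-valued `h`. -/
noncomputable def wlapR (h : ℂ → ℝ) : ℂ → ℂ := wdz (wdzbarR h)

/-- The numerator `h·∂∂̄h − ∂h·∂̄h` of (−1/2 times) the Gaussian curvature of `h|dz|²`. -/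
noncomputable def curvNum (h : ℂ → ℝ) (z : ℂ) : ℂ :=
  (h z : ℂ) * wlapR h z - wdzR h z * wdzbarR h z

/-- The Gaussian curvature `K = −2(h·∂∂̄h − ∂h·∂̄h)/h³` of the conformal metric `h|dz|²`. -/
noncomputable def gaussCurv (h : ℂ → ℝ) (z : ℂ) : ℂ :=
  -2 * curvNum h z / (h z : ℂ) ^ 3


def HasW (g : ℂ → ℂ) (a b z : ℂ) : Prop :=
  HasFDerivAt (𝕜 := ℝ) g (a • (ContinuousLinearMap.id ℝ ℂ) + b • (Complex.conjCLE : ℂ →L[ℝ] ℂ)) z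

theorem HasW.wdz {g : ℂ → ℂ} {a b z : ℂ} (h : HasW g a b z) : wdz g z = a := by
  unfold HasW at h
  unfold _root_.wdz
  rw [h.fderiv]
  simp
  linear_combination ((b-a)/2) * Complex.I_mul_I

theorem HasW.wdzbar {g : ℂ → ℂ} {a b z : ℂ} (h : HasW g a b z) : wdzbar g z = b := by
  unfold HasW at h
  unfold _root_.wdzbar
  rw [h.fderiv]
  simp
  linear_combination ((a-b)/2) * Complex.I_mul_I

theorem HasW.congr {g g' : ℂ → ℂ} {a b z : ℂ} (h : HasW g a b z) (e : g' =ᶠ[𝓝 z] g) :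
    HasW g' a b z := HasFDerivAt.congr_of_eventuallyEq h e

theorem HasW.const (c z : ℂ) : HasW (fun _ => c) 0 0 z := by
  unfold HasW
  exact (hasFDerivAt_const (𝕜 := ℝ) c z).congr_fderiv (ContinuousLinearMap.ext fun x => by simp)

theorem HasW.add {f g : ℂ → ℂ} {a b c d z : ℂ} (hf : HasW f a b z) (hg : HasW g c d z) :
    HasW (fun x => f x + g x) (a + c) (b + d) z := by
  unfold HasW at *
  exact HasFDerivAt.congr_fderiv (HasFDerivAt.fun_add hf hg) (ContinuousLinearMap.ext fun x => by simp; ring)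

theorem HasW.sub {f g : ℂ → ℂ} {a b c d z : ℂ} (hf : HasW f a b z) (hg : HasW g c d z) :
    HasW (fun x => f x - g x) (a - c) (b - d) z := by
  unfold HasW at *
  exact HasFDerivAt.congr_fderiv (HasFDerivAt.fun_sub hf hg) (ContinuousLinearMap.ext fun x => by simp; ring)

theorem HasW.mul {f g : ℂ → ℂ} {a b c d z : ℂ} (hf : HasW f a b z) (hg : HasW g c d z) :
    HasW (fun x => f x * g x) (a * g z + f z * c) (b * g z + f z * d) z := by
  unfold HasW at *
  exact HasFDerivAt.congr_fderiv (HasFDerivAt.fun_mul hf hg) (ContinuousLinearMap.ext fun x => by simp; ring)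

theorem HasW.comp {f : ℂ → ℂ} {F : ℂ → ℂ} {F' a b z : ℂ} (hF : HasDerivAt F F' (f z))
    (hf : HasW f a b z) :
    HasW (fun x => F (f x)) (F' * a) (F' * b) z := by
  unfold HasW at *
  have := (hF.hasFDerivAt.restrictScalars ℝ).comp z hf
  exact HasFDerivAt.congr_fderiv (this) (ContinuousLinearMap.ext fun x => by simp; ring)

theorem HasW.inv {f : ℂ → ℂ} {a b z : ℂ} (hf : HasW f a b z) (h0 : f z ≠ 0) :
    HasW (fun x => (f x)⁻¹) (-(a * (f z)⁻¹ ^ 2)) (-(b * (f z)⁻¹ ^ 2)) z := by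
  have := HasW.comp (hasDerivAt_inv h0) hf
  convert this using 1 <;> · field_simp

theorem HasW.holo {f : ℂ → ℂ} {a z : ℂ} (hf : HasDerivAt f a z) : HasW f a 0 z := by
  unfold HasW
  exact HasFDerivAt.congr_fderiv (hf.hasFDerivAt.restrictScalars ℝ) (ContinuousLinearMap.ext fun x => by simp; ring)

theorem HasW.conj {f : ℂ → ℂ} {a b z : ℂ} (hf : HasW f a b z) :
    HasW (fun x => starRingEnd ℂ (f x)) (starRingEnd ℂ b) (starRingEnd ℂ a) z := by
  unfold HasW at *
  have := (Complex.conjCLE : ℂ →L[ℝ] ℂ).hasFDerivAt.comp z hf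
  exact HasFDerivAt.congr_fderiv (this) (ContinuousLinearMap.ext fun x => by simp; ring)

theorem HasW.log {k : ℂ → ℝ} {a b z : ℂ} (hf : HasW (fun x => (k x : ℂ)) a b z) (h0 : 0 < k z) :
    HasW (fun x => (Real.log (k x) : ℂ)) (a * (k z : ℂ)⁻¹) (b * (k z : ℂ)⁻¹) z := by
  have h1 := HasW.comp (F := Complex.log)
    (Complex.hasDerivAt_log (z := (k z : ℂ)) (by simp [Complex.mem_slitPlane_iff, h0])) hf
  have hc : ContinuousAt k z := by
    have : ContinuousAt (fun x => (k x : ℂ)) z := HasFDerivAt.continuousAt hf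
    have := Complex.continuous_re.continuousAt.comp this
    simpa [Function.comp_def] using this
  have h2 := h1.congr (g' := fun x => (Real.log (k x) : ℂ)) (by
    filter_upwards [hc.eventually (lt_mem_nhds h0)] with x hx
    exact Complex.ofReal_log hx.le)
  convert h2 using 1 <;> ring

theorem alg_id (w wb l b bb c cb : ℂ) (hw : w ≠ 0) (hwb : wb ≠ 0) (hl : l ≠ 0)
    (h Ha Hb Hab D Da Db M : ℂ)
    (eh : h = 1 + (w⁻¹ * wb⁻¹ - 2 + w * wb) * (l⁻¹ * l⁻¹) + b * bb)
    (eHa : Ha = (-(w⁻¹ ^ 2 * wb⁻¹) + wb) * l⁻¹ ^ 2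
      - 2 * (w⁻¹ * wb⁻¹ - 2 + w * wb) * w⁻¹ * l⁻¹ ^ 3 + c * bb)
    (eHb : Hb = (-(w⁻¹ * wb⁻¹ ^ 2) + w) * l⁻¹ ^ 2
      - 2 * (w⁻¹ * wb⁻¹ - 2 + w * wb) * wb⁻¹ * l⁻¹ ^ 3 + b * cb)
    (eHab : Hab = (w⁻¹ ^ 2 * wb⁻¹ ^ 2 + 1) * l⁻¹ ^ 2
      - 2 * (-(w⁻¹ * wb⁻¹ ^ 2) + w) * w⁻¹ * l⁻¹ ^ 3
      - 2 * (-(w⁻¹ ^ 2 * wb⁻¹) + wb) * wb⁻¹ * l⁻¹ ^ 3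
      + 6 * (w⁻¹ * wb⁻¹ - 2 + w * wb) * w⁻¹ * wb⁻¹ * l⁻¹ ^ 4 + c * cb)
    (eD : D = (1 - w * wb) ^ 2 + (w * l) * (wb * l) * (1 + b * bb))
    (eDa : Da = -2 * (1 - w * wb) * wb + (wb * l ^ 2 + 2 * (wb * l)) * (1 + b * bb)
      + (w * l) * (wb * l) * (c * bb))
    (eDb : Db = -2 * (1 - w * wb) * w + (w * l ^ 2 + 2 * (w * l)) * (1 + b * bb)
      + (w * l) * (wb * l) * (b * cb))
    (eM : M = (w * l) * (wb * l) * (4 * (w * wb) - 2)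
      + ((w * l ^ 2) * (wb * l ^ 2) + 4 * ((w * l ^ 2) * (wb * l)) + 2 * ((w * l) * (wb * l)))
        * (1 + b * bb)
      + (w * l) * (wb * l) * ((w * l ^ 2 + 2 * (w * l)) * (c * bb)
        + (wb * l ^ 2 + 2 * (wb * l)) * (b * cb))
      + ((w * l) * (wb * l)) ^ 2 * (c * cb))
    (hD : D ≠ 0) :
    -2 * (h * Hab - Ha * Hb) / h ^ 3
      = -4 / D - 2 * (D * M - (w * l) * (wb * l) * (Da * Db)) / D ^ 3 := by
  have hh : h = D / (w * wb * l ^ 2) := by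
    rw [eh, eD]; field_simp; ring
  have key : (w * wb * l ^ 2) ^ 3 * (h * Hab - Ha * Hb)
      = 2 * D ^ 2 + (D * M - (w * l) * (wb * l) * (Da * Db)) := by
    rw [eh, eHa, eHb, eHab, eD, eDa, eDb, eM]; field_simp; ring
  have hP : w * wb * l ^ 2 ≠ 0 := by positivity
  have : h ^ 3 = D ^ 3 / (w * wb * l ^ 2) ^ 3 := by rw [hh, div_pow]
  rw [this, div_div_eq_mul_div, mul_comm, ← mul_assoc, mul_comm _ (-2 : ℂ), mul_assoc, key]
  field_simp
  ring

noncomputable def EE (x0 x1 x2 b c : ℂ) : ℂ :=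
  let s := starRingEnd ℂ
  let D := (1 - x0 * s x0) ^ 2 + x1 * s x1 * (1 + b * s b)
  let Da := -2 * (1 - x0 * s x0) * s x0 + (s x2 + 2 * s x1) * (1 + b * s b)
      + x1 * s x1 * (c * s b)
  let Db := -2 * (1 - x0 * s x0) * x0 + (x2 + 2 * x1) * (1 + b * s b)
      + x1 * s x1 * (b * s c)
  let M := x1 * s x1 * (4 * (x0 * s x0) - 2)
      + (x2 * s x2 + 4 * (x2 * s x1) + 2 * (x1 * s x1)) * (1 + b * s b)
      + x1 * s x1 * ((x2 + 2 * x1) * (c * s b) + (s x2 + 2 * s x1) * (b * s c))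
      + (x1 * s x1) ^ 2 * (c * s c);
  -4 / D - 2 * (D * M - x1 * s x1 * (Da * Db)) / D ^ 3

theorem EE_lim {α : Type*} {l : Filter α} {x0 x1 x2 b c : α → ℂ} {b0 c0 : ℂ}
    (h0 : Tendsto x0 l (𝓝 0)) (h1 : Tendsto x1 l (𝓝 0)) (h2 : Tendsto x2 l (𝓝 0))
    (hb : Tendsto b l (𝓝 b0)) (hc : Tendsto c l (𝓝 c0)) :
    Tendsto (fun a => EE (x0 a) (x1 a) (x2 a) (b a) (c a)) l (𝓝 (-4)) := by
  have hcont : ContinuousAt (fun y : ℂ × ℂ × ℂ × ℂ × ℂ =>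
      EE y.1 y.2.1 y.2.2.1 y.2.2.2.1 y.2.2.2.2) (0, 0, 0, b0, c0) := by
    unfold EE
    have hs : Continuous (starRingEnd ℂ) := Complex.continuous_conj
    simp only
    apply ContinuousAt.sub
    · apply ContinuousAt.div
      · fun_prop
      · fun_prop
      · simp
    · apply ContinuousAt.div
      · fun_prop
      · fun_prop
      · simp
  have := hcont.tendsto.comp (h0.prodMk_nhds (h1.prodMk_nhds (h2.prodMk_nhds (hb.prodMk_nhds hc))))
  have e : EE 0 0 0 b0 c0 = -4 := by simp [EE]
  rw [← e]
  exact this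

theorem curv (w b b' : ℂ → ℂ) (h : ℂ → ℝ)
    (hw : ∀ᶠ T in 𝓝 (0 : ℂ), HasDerivAt w 1 T)
    (hb : ∀ᶠ T in 𝓝 (0 : ℂ), HasDerivAt b (b' T) T)
    (hb' : DifferentiableAt ℂ b' 0) (w0 : w 0 ≠ 0) (w1 : ‖w 0‖ < 1)
    (hh : ∀ᶠ T in 𝓝 (0 : ℂ), h T = 1 + ‖w T‖ ^ 2 * u (‖w T‖ ^ 2) ^ 2 + ‖b T‖ ^ 2) :
    gaussCurv h 0 = EE (w 0) (w 0 * (Real.log (‖w 0‖ ^ 2) : ℂ))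
      (w 0 * (Real.log (‖w 0‖ ^ 2) : ℂ) ^ 2) (b 0) (b' 0) := by
  set s := starRingEnd ℂ with hs
  set l : ℂ → ℂ := fun T => (Real.log (‖w T‖ ^ 2) : ℂ) with hl
  have cw : ContinuousAt w 0 := hw.self_of_nhds.continuousAt
  have ew0 : ∀ᶠ T in 𝓝 (0 : ℂ), w T ≠ 0 := cw.eventually_ne w0
  have ew1 : ∀ᶠ T in 𝓝 (0 : ℂ), ‖w T‖ < 1 := cw.norm.eventually (gt_mem_nhds w1)
  have l0 : ∀ T, w T ≠ 0 → ‖w T‖ < 1 → l T ≠ 0 := by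
    intro T h0 h1
    simp only [hl, ne_eq, Complex.ofReal_eq_zero]
    have hp := norm_pos_iff.2 h0
    exact (Real.log_neg (by positivity) (by nlinarith)).ne
  have ss : ∀ z : ℂ, z * s z = ((‖z‖ ^ 2 : ℝ) : ℂ) := by
    intro z; rw [hs, Complex.mul_conj, Complex.normSq_eq_norm_sq]
  have s0 : ∀ z : ℂ, z ≠ 0 → s z ≠ 0 := by intro z hz; simpa [hs] using hz
  -- basic rules
  have rw1 : ∀ T, HasDerivAt w 1 T → HasW w 1 0 T := fun T h => HasW.holo h
  have rw2 : ∀ T, HasDerivAt w 1 T → HasW (fun T => s (w T)) 0 1 T := fun T h => by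
    simpa using (rw1 T h).conj
  have rl : ∀ T, HasDerivAt w 1 T → w T ≠ 0 → HasW l (w T)⁻¹ (s (w T))⁻¹ T := by
    intro T h h0
    have := (rw1 T h).mul (rw2 T h)
    simp only [ss] at this
    have := HasW.log this (by have := norm_pos_iff.2 h0; positivity)
    convert this using 1
    · rw [← ss]; have := s0 _ h0; field_simp; ring
    · rw [← ss]; have := s0 _ h0; field_simp; ring
  have rS : ∀ T, HasDerivAt w 1 T → w T ≠ 0 → ‖w T‖ < 1 → HasW (fun T => (l T)⁻¹)
      (-((w T)⁻¹ * (l T)⁻¹ ^ 2)) (-((s (w T))⁻¹ * (l T)⁻¹ ^ 2)) T := by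
    intro T h h0 h1
    exact (rl T h h0).inv (l0 T h0 h1)
  have rv : ∀ T, HasDerivAt w 1 T → w T ≠ 0 → HasW (fun T => (w T)⁻¹) (-((w T)⁻¹ ^ 2)) 0 T := by
    intro T h h0
    simpa using (rw1 T h).inv h0
  have rvb : ∀ T, HasDerivAt w 1 T → w T ≠ 0 →
      HasW (fun T => (s (w T))⁻¹) 0 (-((s (w T))⁻¹ ^ 2)) T := by
    intro T h h0
    simpa using (rw2 T h).inv (s0 _ h0)
  have rQ : ∀ T, HasDerivAt w 1 T → w T ≠ 0 →
      HasW (fun T => (w T)⁻¹ * (s (w T))⁻¹ - 2 + w T * s (w T))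
        (-((w T)⁻¹ ^ 2 * (s (w T))⁻¹) + s (w T)) (-((w T)⁻¹ * (s (w T))⁻¹ ^ 2) + w T) T := by
    intro T h h0
    have := (((rv T h h0).mul (rvb T h h0)).sub (HasW.const 2 T)).add ((rw1 T h).mul (rw2 T h))
    convert this using 1 <;> ring
  have eh : ∀ᶠ T in 𝓝 (0 : ℂ), (h T : ℂ) = 1 + ((w T)⁻¹ * (s (w T))⁻¹ - 2 + w T * s (w T))
      * ((l T)⁻¹ * (l T)⁻¹) + b T * s (b T) := by
    filter_upwards [hh, ew0, ew1] with T h1 h0 hlt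
    have hp := norm_pos_iff.2 h0
    have hne : ‖w T‖ ^ 2 ≠ 1 := by nlinarith
    have hl0 := l0 T h0 hlt
    have e1 : (w T)⁻¹ * (s (w T))⁻¹ = ((‖w T‖ ^ 2 : ℝ) : ℂ)⁻¹ := by rw [← mul_inv, ss]
    rw [e1, ss, ss, h1]
    simp only [hl] at hl0 ⊢
    rw [← Complex.ofReal_inv, ← Complex.ofReal_inv]
    norm_cast
    norm_cast at hl0
    unfold u
    rw [if_neg hne]
    push_cast
    field_simp
    ring
  have r1 : ∀ᶠ T in 𝓝 (0 : ℂ), HasW (fun T => (h T : ℂ))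
      ((-((w T)⁻¹ ^ 2 * (s (w T))⁻¹) + s (w T)) * (l T)⁻¹ ^ 2
      - 2 * ((w T)⁻¹ * (s (w T))⁻¹ - 2 + w T * s (w T)) * (w T)⁻¹ * (l T)⁻¹ ^ 3 + b' T * s (b T))
      ((-((w T)⁻¹ * (s (w T))⁻¹ ^ 2) + w T) * ((l T)⁻¹ * (l T)⁻¹)
      - ((w T)⁻¹ * (s (w T))⁻¹ - 2 + w T * s (w T)) * ((s (w T))⁻¹ *
        ((l T)⁻¹ * ((l T)⁻¹ * (l T)⁻¹)) + (s (w T))⁻¹ *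
        ((l T)⁻¹ * ((l T)⁻¹ * (l T)⁻¹))) + b T * s (b' T)) T := by
    filter_upwards [eh.eventually_nhds, ew0, ew1, hw, hb] with T h1 h0 hlt hwT hbT
    have hB := (HasW.holo hbT).mul (HasW.holo hbT).conj
    have := (((HasW.const 1 T).add ((rQ T hwT h0).mul
      ((rS T hwT h0 hlt).mul (rS T hwT h0 hlt)))).add hB).congr h1
    convert this using 1
    · simp only [map_zero]; ring
    · ring
  have r2 := r1.self_of_nhds
  have a1 : wdzR h 0 = _ := r2.wdz
  have a2 : wdzbarR h 0 = _ := r2.wdzbar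
  have e2 : wdzbarR h =ᶠ[𝓝 0] fun T => ((-((w T)⁻¹ * (s (w T))⁻¹ ^ 2) + w T) * ((l T)⁻¹ * (l T)⁻¹)
      - ((w T)⁻¹ * (s (w T))⁻¹ - 2 + w T * s (w T)) * ((s (w T))⁻¹ *
        ((l T)⁻¹ * ((l T)⁻¹ * (l T)⁻¹)) + (s (w T))⁻¹ *
        ((l T)⁻¹ * ((l T)⁻¹ * (l T)⁻¹))) + b T * s (b' T)) := by
    filter_upwards [r1] with T hT
    exact hT.wdzbar
  have hw' := hw.self_of_nhds
  have hS := rS 0 hw' w0 w1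
  have hV := rv 0 hw' w0
  have hVb := rvb 0 hw' w0
  have hS3 := hVb.mul (hS.mul (hS.mul hS))
  have hA : HasW (fun T => -((w T)⁻¹ * (s (w T))⁻¹ ^ 2) + w T)
      ((w 0)⁻¹ ^ 2 * (s (w 0))⁻¹ ^ 2 + 1)
      (2 * (w 0)⁻¹ * (s (w 0))⁻¹ ^ 3) 0 := by
    have := ((HasW.const 0 0).sub (hV.mul (hVb.mul hVb))).add (rw1 0 hw')
    convert this using 1
    · ext T; ring
    · ring
    · ring
  have hC := (HasW.holo hb.self_of_nhds).mul (HasW.holo hb'.hasDerivAt).conj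
  have r3 := (((hA.mul (hS.mul hS)).sub ((rQ 0 hw' w0).mul (hS3.add hS3))).add hC).congr e2
  have a3 : wlapR h 0 = _ := r3.wdz
  unfold gaussCurv curvNum
  rw [a1, a2, a3]
  have hD : (1 - w 0 * s (w 0)) ^ 2 + (w 0 * l 0) * (s (w 0) * l 0) * (1 + b 0 * s (b 0)) ≠ 0 := by
    have : (w 0 * l 0) * (s (w 0) * l 0) = (w 0 * s (w 0)) * l 0 ^ 2 := by ring
    rw [this, ss, ss]
    simp only [hl]
    have hp := norm_pos_iff.2 w0
    have : 0 < (1 - ‖w 0‖ ^ 2) ^ 2 + ‖w 0‖ ^ 2 * Real.log (‖w 0‖ ^ 2) ^ 2 * (1 + ‖b 0‖ ^ 2) := by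
      have : 0 < 1 - ‖w 0‖ ^ 2 := by nlinarith
      positivity
    exact_mod_cast this.ne'
  rw [alg_id (w 0) (s (w 0)) (l 0) (b 0) (s (b 0)) (b' 0) (s (b' 0)) w0 (s0 _ w0) (l0 0 w0 w1)
    (h 0) _ _ _ _ _ _ _ eh.self_of_nhds rfl ?_ ?_ rfl rfl rfl rfl hD]
  · have sl : starRingEnd ℂ (l 0) = l 0 := Complex.conj_ofReal _
    change _ = EE (w 0) (w 0 * l 0) (w 0 * l 0 ^ 2) (b 0) (b' 0)
    simp only [EE, map_mul, map_pow, sl, hs]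
  · ring
  · simp only [map_zero]; ring

theorem diff_dir {n : ℕ} (f : EuclideanSpace ℂ (Fin n) → ℂ) (hf : Differentiable ℂ f)
    (v : EuclideanSpace ℂ (Fin n)) : Differentiable ℂ (fun q => fderiv ℂ f q v) := by
  set k : ℝ → ℂ := fun θ => deriv (circleMap 0 1) θ * (1 / (circleMap 0 1 θ - 0) ^ 2) with hk
  have kc : Continuous k := by
    have h1 : Continuous (circleMap 0 1) := continuous_circleMap 0 1
    have e : k = fun θ => (circleMap 0 1 θ * I) * (circleMap 0 1 θ ^ 2)⁻¹ := by
      ext θ; simp [hk, deriv_circleMap]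
    rw [e]
    refine (h1.mul continuous_const).mul ((h1.pow 2).inv₀ fun θ => ?_)
    exact pow_ne_zero _ (circleMap_ne_center one_ne_zero)
  have line : ∀ (q x : EuclideanSpace ℂ (Fin n)) (z : ℂ),
      HasDerivAt (fun z : ℂ => f (q + z • x)) (fderiv ℂ f (q + z • x) x) z := by
    intro q x z
    have h1 : HasDerivAt (fun z : ℂ => q + z • x) x z := by
      simpa using ((hasDerivAt_id z).smul_const x).const_add q
    exact (hf (q + z • x)).hasFDerivAt.comp_hasDerivAt z h1
  have rep : ∀ q, fderiv ℂ f q v = (2 * Real.pi * I : ℂ)⁻¹ •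
      ∫ θ in (0 : ℝ)..2 * Real.pi, k θ • f (q + circleMap 0 1 θ • v) := by
    intro q
    have hd : Differentiable ℂ (fun z : ℂ => f (q + z • v)) := fun z => (line q v z).differentiableAt
    have h1 := hd.diffContOnCl (s := ball (0 : ℂ) 1) |>.deriv_eq_smul_circleIntegral one_pos
    have h2 := (line q v 0).deriv
    rw [zero_smul, add_zero] at h2
    rw [← h2, eq_inv_smul_iff₀ Complex.two_pi_I_ne_zero, ← h1]
    simp only [circleIntegral, hk, smul_eq_mul, mul_assoc]
  intro q0
  obtain ⟨C, hC⟩ := (isCompact_closedBall q0 (2 + ‖v‖)).exists_bound_of_continuousOn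
    hf.continuous.continuousOn
  have hfd : ∀ y, dist y q0 ≤ 1 + ‖v‖ → ‖fderiv ℂ f y‖ ≤ C := by
    intro y hy
    have C0 : 0 ≤ C := (norm_nonneg _).trans (hC q0 (by simp; positivity))
    refine ContinuousLinearMap.opNorm_le_bound _ C0 fun x => ?_
    rcases eq_or_ne x 0 with rfl | hx
    · simp
    have hxp := norm_pos_iff.2 hx
    have hd : Differentiable ℂ (fun z : ℂ => f (y + z • x)) := fun z => (line y x z).differentiableAt
    have h2 := (line y x 0).deriv
    rw [zero_smul, add_zero] at h2
    have := norm_deriv_le_of_forall_mem_sphere_norm_le (c := 0) (R := ‖x‖⁻¹) (C := C)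
      (by positivity) (hd.diffContOnCl) (by
        intro z hz
        apply hC
        rw [mem_closedBall, dist_eq_norm]
        rw [dist_eq_norm] at hy
        rw [mem_sphere_zero_iff_norm] at hz
        have e1 : ‖z • x‖ = 1 := by rw [norm_smul, hz]; field_simp
        have e2 : y + z • x - q0 = (y - q0) + z • x := by abel
        rw [e2]
        linarith [norm_add_le (y - q0) (z • x)])
    rw [h2] at this
    simpa using this
  have main := intervalIntegral.hasFDerivAt_integral_of_dominated_of_fderiv_le
    (𝕜 := ℂ) (μ := MeasureTheory.volume) (a := 0) (b := 2 * Real.pi)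
    (F := fun q θ => k θ • f (q + circleMap 0 1 θ • v))
    (F' := fun q θ => k θ • fderiv ℂ f (q + circleMap 0 1 θ • v))
    (bound := fun θ => ‖k θ‖ * C) (x₀ := q0) (s := ball q0 1) (ball_mem_nhds q0 one_pos)
    (Eventually.of_forall fun q => by
      refine Continuous.aestronglyMeasurable ?_
      have := hf.continuous
      have h1 : Continuous (circleMap 0 1) := continuous_circleMap 0 1
      fun_prop)
    (by
      refine Continuous.intervalIntegrable ?_ _ _
      have := hf.continuous
      have h1 : Continuous (circleMap 0 1) := continuous_circleMap 0 1
      fun_prop)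
    (by
      have h1 : Continuous (circleMap 0 1) := continuous_circleMap 0 1
      have h2 : Continuous (fun θ => q0 + circleMap 0 1 θ • v) := by fun_prop
      have h3 : Measurable (fun θ => fderiv ℂ f (q0 + circleMap 0 1 θ • v)) :=
        (measurable_fderiv ℂ f).comp h2.measurable
      have : ProperSpace (EuclideanSpace ℂ (Fin n) →L[ℂ] ℂ) := FiniteDimensional.proper ℂ _
      exact kc.aestronglyMeasurable.smul h3.aestronglyMeasurable)
    (Eventually.of_forall fun θ _ q hq => by
      rw [norm_smul]
      refine mul_le_mul_of_nonneg_left (hfd _ ?_) (norm_nonneg _)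
      rw [mem_ball, dist_eq_norm] at hq
      rw [dist_eq_norm]
      have e1 : ‖circleMap 0 1 θ • v‖ = ‖v‖ := by rw [norm_smul]; simp
      have e2 : q + circleMap 0 1 θ • v - q0 = (q - q0) + circleMap 0 1 θ • v := by abel
      rw [e2]
      linarith [norm_add_le (q - q0) (circleMap 0 1 θ • v)])
    (by
      refine Continuous.intervalIntegrable ?_ _ _
      fun_prop)
    (Eventually.of_forall fun θ _ q hq => by
      have h1 : HasFDerivAt (fun q => q + circleMap 0 1 θ • v)
        (ContinuousLinearMap.id ℂ (EuclideanSpace ℂ (Fin n))) q := (hasFDerivAt_id q).add_const _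
      have h2 := ((hf (q + circleMap 0 1 θ • v)).hasFDerivAt.comp q h1).const_smul (k θ)
      rw [ContinuousLinearMap.comp_id] at h2
      exact h2)
  have := (main.const_smul (2 * Real.pi * I : ℂ)⁻¹).differentiableAt
  have e : (fun q => fderiv ℂ f q v) = _ := funext rep
  rw [e]
  exact this

theorem wlog_lim {α : Type*} {l : Filter α} {w : α → ℂ} (hw : Tendsto w l (𝓝 0))
    (h0 : ∀ᶠ a in l, w a ≠ 0) :
    Tendsto (fun a => w a * (Real.log (‖w a‖ ^ 2) : ℂ)) l (𝓝 0) ∧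
    Tendsto (fun a => w a * (Real.log (‖w a‖ ^ 2) : ℂ) ^ 2) l (𝓝 0) := by
  have hr : Tendsto (fun a => ‖w a‖) l (𝓝[>] 0) := by
    rw [tendsto_nhdsWithin_iff]
    exact ⟨by simpa using hw.norm, h0.mono fun a h => norm_pos_iff.2 h⟩
  have t1 := (tendsto_log_mul_rpow_nhdsGT_zero (r := 1) one_pos).comp hr
  have t2 := (tendsto_log_mul_rpow_nhdsGT_zero (r := 1 / 2) (by norm_num)).comp hr
  constructor
  · rw [tendsto_zero_iff_norm_tendsto_zero]
    have := (t1.const_mul 2).norm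
    simp only [mul_zero, norm_zero] at this
    refine this.congr fun a => ?_
    simp [Real.log_pow]
    ring
  · rw [tendsto_zero_iff_norm_tendsto_zero]
    have := ((t2.pow 2).const_mul 4).norm
    simp only [mul_zero, norm_zero, ne_eq, OfNat.ofNat_ne_zero, not_false_eq_true, zero_pow] at this
    refine this.congr fun a => ?_
    have e : (‖w a‖ ^ (1 / 2 : ℝ)) ^ 2 = ‖w a‖ := by
      rw [← Real.rpow_natCast, ← Real.rpow_mul (norm_nonneg _)]; norm_num
    simp only [Function.comp_apply, mul_pow, e, Real.log_pow]
    simp [mul_pow]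
    ring

/-- if `f(p) = 0` and `∂f/∂z₁(p) ≠ 0`, there is a nowhere-vanishing
holomorphic vector field `X` on a neighbourhood `V` of `p` such that the leafwise
Gaussian curvature at the base point tends to `−4` as the base point tends to `p`. -/
theorem stmt5 (n : ℕ) (hn : 2 ≤ n)
    (f : EuclideanSpace ℂ (Fin n) → ℂ) (hf : Differentiable ℂ f)
    (p : EuclideanSpace ℂ (Fin n)) (hfp : f p = 0)
    (hdf1 : fderiv ℂ f p (EuclideanSpace.single (⟨0, by omega⟩ : Fin n) 1) ≠ 0) :
    ∃ (V : Set (EuclideanSpace ℂ (Fin n))), IsOpen V ∧ p ∈ V ∧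
    ∃ (X : EuclideanSpace ℂ (Fin n) → EuclideanSpace ℂ (Fin n)),
      DifferentiableOn ℂ X V ∧ (∀ q ∈ V, X q ≠ 0) ∧
      ∀ δ : ℝ, 0 < δ →
        ∃ (V' : Set (EuclideanSpace ℂ (Fin n))), V' ⊆ V ∧ IsOpen V' ∧ p ∈ V' ∧
          ∀ q ∈ V', f q ≠ 0 →
          ∀ (ε : ℝ), 0 < ε →
          ∀ (Z : ℂ → EuclideanSpace ℂ (Fin n)),
            DifferentiableOn ℂ Z (Metric.ball 0 ε) →
            Z 0 = q →
            (∀ T ∈ Metric.ball (0 : ℂ) ε, Z T ∈ V) →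
            (∀ T ∈ Metric.ball (0 : ℂ) ε, deriv Z T = X (Z T)) →
            (∀ T ∈ Metric.ball (0 : ℂ) ε, f (Z T) ≠ 0) →
            ‖gaussCurv (fun T =>
              (1 + ‖f (Z T)‖ ^ 2 * u (‖f (Z T)‖ ^ 2) ^ 2) *
                ‖fderiv ℂ f (Z T) (X (Z T))‖ ^ 2 + ‖X (Z T)‖ ^ 2) 0 - (-4)‖ < δ := by
  set e : EuclideanSpace ℂ (Fin n) := EuclideanSpace.single (⟨0, by omega⟩ : Fin n) 1 with he
  have ne1 : ‖e‖ = 1 := by simp [he]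
  set g : EuclideanSpace ℂ (Fin n) → ℂ := fun q => fderiv ℂ f q e with hg
  have gd : Differentiable ℂ g := diff_dir f hf e
  set g2 : EuclideanSpace ℂ (Fin n) → ℂ := fun q => fderiv ℂ g q e with hg2
  have g2d : Differentiable ℂ g2 := diff_dir g gd e
  have Vo : IsOpen {q | g q ≠ 0} := isOpen_ne_fun gd.continuous continuous_const
  refine ⟨{q | g q ≠ 0}, Vo, hdf1, fun q => (g q)⁻¹ • e, ?_, ?_, ?_⟩
  · intro q hq
    exact (((gd q).inv hq).smul_const e).differentiableWithinAt
  · intro q hq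
    refine smul_ne_zero (inv_ne_zero hq) ?_
    rw [← norm_pos_iff, ne1]; exact one_pos
  intro δ hδ
  set B : EuclideanSpace ℂ (Fin n) → ℂ := fun q => -(g2 q * (g q)⁻¹) / (g q) ^ 2 with hB
  have lw : Tendsto f (𝓝[{q | f q ≠ 0}] p) (𝓝 0) := by
    rw [← hfp]; exact hf.continuous.continuousAt.mono_left nhdsWithin_le_nhds
  have lw0 : ∀ᶠ q in 𝓝[{q | f q ≠ 0}] p, f q ≠ 0 := self_mem_nhdsWithin
  obtain ⟨l1, l2⟩ := wlog_lim lw lw0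
  have cg : ContinuousAt g p := gd.continuous.continuousAt
  have cg2 : ContinuousAt g2 p := g2d.continuous.continuousAt
  have lb : Tendsto (fun q => (g q)⁻¹) (𝓝[{q | f q ≠ 0}] p) (𝓝 (g p)⁻¹) :=
    (cg.inv₀ hdf1).tendsto.mono_left nhdsWithin_le_nhds
  have lB : Tendsto B (𝓝[{q | f q ≠ 0}] p) (𝓝 (B p)) :=
    (((cg2.mul (cg.inv₀ hdf1)).neg.div (cg.pow 2) (pow_ne_zero 2 hdf1)).tendsto).mono_left
      nhdsWithin_le_nhds
  have lim := EE_lim lw l1 l2 lb lB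
  have ev1 := lim.eventually (ball_mem_nhds (-4 : ℂ) hδ)
  have ev2 : ∀ᶠ q in 𝓝[{q | f q ≠ 0}] p, ‖f q‖ < 1 := by
    have := lw.norm
    rw [norm_zero] at this
    exact this.eventually (gt_mem_nhds one_pos)
  obtain ⟨O, Oo, pO, hO⟩ := mem_nhdsWithin.1 (ev1.and ev2)
  refine ⟨O ∩ {q | g q ≠ 0}, Set.inter_subset_right, Oo.inter Vo, ⟨pO, hdf1⟩, ?_⟩
  rintro q ⟨qO, qV⟩ fq ε hε Z hZ Z0 ZV ZX Zf
  obtain ⟨m1, m2⟩ := hO ⟨qO, fq⟩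
  have bn : ball (0 : ℂ) ε ∈ 𝓝 (0 : ℂ) := ball_mem_nhds 0 hε
  have ZD : ∀ T ∈ ball (0 : ℂ) ε, HasDerivAt Z ((g (Z T))⁻¹ • e) T := by
    intro T hT
    have := (hZ.differentiableAt (isOpen_ball.mem_nhds hT)).hasDerivAt
    rwa [ZX T hT] at this
  have gX : ∀ T ∈ ball (0 : ℂ) ε, fderiv ℂ f (Z T) ((g (Z T))⁻¹ • e) = 1 := by
    intro T hT
    rw [map_smul, smul_eq_mul]
    exact inv_mul_cancel₀ (ZV T hT)
  have key := curv (fun T => f (Z T)) (fun T => (g (Z T))⁻¹) (fun T => B (Z T))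
    (fun T => (1 + ‖f (Z T)‖ ^ 2 * u (‖f (Z T)‖ ^ 2) ^ 2) *
      ‖fderiv ℂ f (Z T) ((g (Z T))⁻¹ • e)‖ ^ 2 + ‖(g (Z T))⁻¹ • e‖ ^ 2)
    (by
      filter_upwards [bn] with T hT
      have := (hf (Z T)).hasFDerivAt.comp_hasDerivAt T (ZD T hT)
      rwa [gX T hT] at this)
    (by
      filter_upwards [bn] with T hT
      have h1 := (gd (Z T)).hasFDerivAt.comp_hasDerivAt T (ZD T hT)
      have h2 := h1.fun_inv (ZV T hT)
      refine h2.congr_deriv ?_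
      simp only [hB, map_smul, smul_eq_mul, hg2, Function.comp_apply]
      ring)
    (by
      have d0 : DifferentiableAt ℂ Z 0 := (ZD 0 (mem_ball_self hε)).differentiableAt
      have d1 : DifferentiableAt ℂ (fun T => g (Z T)) 0 := (gd (Z 0)).comp 0 d0
      have d2 : DifferentiableAt ℂ (fun T => g2 (Z T)) 0 := (g2d (Z 0)).comp 0 d0
      have n0 : g (Z 0) ≠ 0 := ZV 0 (mem_ball_self hε)
      exact (d2.mul (d1.inv n0)).neg.div (d1.pow 2) (pow_ne_zero 2 n0))
    (by simpa [Z0] using fq) (by simpa [Z0] using m2)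
    (by
      filter_upwards [bn] with T hT
      rw [gX T hT, norm_smul, ne1]
      simp)
  rw [key]
  simp only [Z0]
  rw [← dist_eq_norm]
  exact m1
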